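/- Let n ≥ 1, let S_n act on ℝ^n by permuting coordinates, and let C = { v ↦ x·v + y𝟙 : x, y ∈ ℝ } ⊆ Aff_{S_n}(ℝ^n, ℝ^n) be the width-1 convolutional layer space, where 𝟙 = (1,…,1)ᵀ. Assume σ : ℝ → ℝ is continuous and not a polynomial, and let d ≥ 2. Then the set of first-coordinate projections { π_1 ∘ F : F ∈ U(C, …, C) } (d copies of C) equals { x ↦ f(x_1) : f ∈ C(ℝ, ℝ) }, which in turn equals C_{ρ_1}(ℝ^n, ℝ) for the equivalence relation ρ_1 = { (α, β) ∈ ℝ^n × ℝ^n : α_1 = β_1 }; moreover, for n ≥ 2 this set is a proper subset of C_{Stab_{S_n}(1)}(ℝ^n, ℝ), the space of continuous real-valued functions on ℝ^n invariant under permutations fixing the first coordinate. -/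

import Mathlib

open scoped BigOperators

noncomputable section EquivUnivPreamble

/-- Point-wise activation: apply `σ` coordinatewise. -/
def act (σ : ℝ → ℝ) {Z : Type} (v : Z → ℝ) : Z → ℝ := fun z => σ (v z)

/-- The action of a group element `g` on a real-valued function `v : Y → ℝ` induced by a
`G`-action on `Y` (the permutation representation `ℝ^Y`): `(g • v) y = v (g⁻¹ • y)`. -/
def pSMul {G Y : Type} [Group G] [MulAction G Y] (g : G) (v : Y → ℝ) : Y → ℝ :=
  fun y => v (g⁻¹ • y)

/-- `G`-equivariance of a map between permutation representations. -/
def Equivariant (G : Type) [Group G] {Y Z : Type} [MulAction G Y] [MulAction G Z]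
    (f : (Y → ℝ) → (Z → ℝ)) : Prop :=
  ∀ (g : G) (v : Y → ℝ), f (pSMul g v) = pSMul g (f v)

/-- A map between permutation representations is affine. -/
def IsAffine {Y Z : Type} (f : (Y → ℝ) → (Z → ℝ)) : Prop :=
  ∃ (φ : (Y → ℝ) →ₗ[ℝ] (Z → ℝ)) (b : Z → ℝ), ∀ v, f v = φ v + b

/-- A layer space: the set of maps `v ↦ ∑ᵢ cᵢ φⁱ(v) + b` where `φ¹, …, φᵏ` are fixed
`G`-equivariant linear maps and the bias `b` ranges over all functions constant on
`G`-orbits (i.e. all `∑ⱼ yⱼ 1_{Xⱼ}` with `Xⱼ` the orbits). -/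
def IsLayerSpace (G : Type) [Group G] {Y Z : Type} [MulAction G Y] [MulAction G Z]
    (M : Set ((Y → ℝ) → (Z → ℝ))) : Prop :=
  ∃ (k : ℕ) (φ : Fin k → ((Y → ℝ) →ₗ[ℝ] (Z → ℝ))),
    (∀ i, Equivariant G (φ i : (Y → ℝ) → (Z → ℝ))) ∧
    M = { f | ∃ (c : Fin k → ℝ) (b : Z → ℝ),
            (∀ (g : G) (z : Z), b (g • z) = b z) ∧
            ∀ v, f v = (∑ i, c i • φ i v) + b }

/-- `M^{k×h}`: the layer space `M` with input multiplicity `k` and output multiplicity `h`,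
`(v₁,…,v_k) ↦ (∑ⱼ f_{1,j}(vⱼ), …, ∑ⱼ f_{h,j}(vⱼ))`, identifying `V ⊗ ℝᵏ` with
`Fin k × Y → ℝ`. -/
def layerPow {Y Z : Type} (M : Set ((Y → ℝ) → (Z → ℝ))) (k h : ℕ) :
    Set ((Fin k × Y → ℝ) → (Fin h × Z → ℝ)) :=
  { F | ∃ f : Fin h → Fin k → ((Y → ℝ) → (Z → ℝ)),
      (∀ i j, f i j ∈ M) ∧
      ∀ (v : Fin k × Y → ℝ) (p : Fin h × Z), F v p = ∑ j, f p.1 j (fun y => v (j, y)) p.2 }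

/-- `M^{1×h}` under the canonical identification `V ⊗ ℝ¹ ≅ V` of the input. -/
def layerPowIn {Y Z : Type} (M : Set ((Y → ℝ) → (Z → ℝ))) (h : ℕ) :
    Set ((Y → ℝ) → (Fin h × Z → ℝ)) :=
  { F | ∃ f : Fin h → ((Y → ℝ) → (Z → ℝ)), (∀ i, f i ∈ M) ∧
      ∀ (v : Y → ℝ) (p : Fin h × Z), F v p = f p.1 v p.2 }

/-- `M^{k×1}` under the canonical identification `W ⊗ ℝ¹ ≅ W` of the output. -/
def layerPowOut {Y Z : Type} (M : Set ((Y → ℝ) → (Z → ℝ))) (k : ℕ) :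
    Set ((Fin k × Y → ℝ) → (Z → ℝ)) :=
  { F | ∃ f : Fin k → ((Y → ℝ) → (Z → ℝ)), (∀ j, f j ∈ M) ∧
      ∀ (v : Fin k × Y → ℝ) (z : Z), F v z = ∑ j, f j (fun y => v (j, y)) z }

/-- Evaluation of a chain of `d+1` layers with the point-wise activation `σ` between
consecutive layers: `φ_d ∘ σ̃ ∘ ⋯ ∘ σ̃ ∘ φ_0`. -/
def chainEval (σ : ℝ → ℝ) : ∀ (d : ℕ) (Y : Fin (d + 2) → Type)
    (φ : ∀ i : Fin (d + 1), (Y i.castSucc → ℝ) → (Y i.succ → ℝ)),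
    (Y 0 → ℝ) → (Y (Fin.last (d + 1)) → ℝ)
  | 0, _, φ => φ 0
  | (d + 1), Y, φ => fun v =>
      φ (Fin.last (d + 1))
        (act σ (chainEval σ d (fun i : Fin (d + 2) => Y i.castSucc)
          (fun i : Fin (d + 1) => φ i.castSucc) v))

/-- The neural space `N(M₀, …, M_d)` of a chain of `d+1` layer spaces. -/
def NeuralSpace (σ : ℝ → ℝ) (d : ℕ) (Y : Fin (d + 2) → Type)
    (M : ∀ i : Fin (d + 1), Set ((Y i.castSucc → ℝ) → (Y i.succ → ℝ))) :
    Set ((Y 0 → ℝ) → (Y (Fin.last (d + 1)) → ℝ)) :=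
  { F | ∃ φ : ∀ i : Fin (d + 1), (Y i.castSucc → ℝ) → (Y i.succ → ℝ),
      (∀ i, φ i ∈ M i) ∧ F = chainEval σ d Y φ }

/-- All networks `N(M₀^{1×k₁}, M₁^{k₁×k₂}, …, M_d^{k_d×k})` for the chain `M₀,…,M_d`, with
arbitrary interior multiplicities and fixed output multiplicity `k` (union over the interior
multiplicities). -/
def WPre (σ : ℝ → ℝ) : ∀ (d : ℕ) (Y : Fin (d + 2) → Type)
    (M : ∀ i : Fin (d + 1), Set ((Y i.castSucc → ℝ) → (Y i.succ → ℝ))) (k : ℕ),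
    Set ((Y 0 → ℝ) → (Fin k × Y (Fin.last (d + 1)) → ℝ))
  | 0, _, M, k => layerPowIn (M 0) k
  | (d + 1), Y, M, k =>
      { F | ∃ (k' : ℕ) (g : (Y 0 → ℝ) → (Fin k' × Y (Fin.last (d + 1)).castSucc → ℝ)),
          g ∈ WPre σ d (fun i : Fin (d + 2) => Y i.castSucc)
                (fun i : Fin (d + 1) => M i.castSucc) k' ∧
          ∃ f ∈ layerPow (M (Fin.last (d + 1))) k' k,
          F = fun v => f (act σ (g v)) }

/-- The network space `N(M₀^{1×k}, M₁^{k×k}, …, M_d^{k×k})`: all multiplicities equal to `k`. -/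
def WFix (σ : ℝ → ℝ) : ∀ (d : ℕ) (Y : Fin (d + 2) → Type)
    (M : ∀ i : Fin (d + 1), Set ((Y i.castSucc → ℝ) → (Y i.succ → ℝ))) (k : ℕ),
    Set ((Y 0 → ℝ) → (Fin k × Y (Fin.last (d + 1)) → ℝ))
  | 0, _, M, k => layerPowIn (M 0) k
  | (d + 1), Y, M, k =>
      { F | ∃ g ∈ WFix σ d (fun i : Fin (d + 2) => Y i.castSucc)
                (fun i : Fin (d + 1) => M i.castSucc) k,
          ∃ f ∈ layerPow (M (Fin.last (d + 1))) k k,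
          F = fun v => f (act σ (g v)) }

/-- Closure in the topology of uniform convergence on compact sets. -/
def UnifClosure {A B : Type} [TopologicalSpace A] [PseudoMetricSpace B]
    (S : Set (A → B)) : Set (A → B) :=
  { F | ∀ K : Set A, IsCompact K → ∀ ε : ℝ, 0 < ε → ∃ g ∈ S, ∀ x ∈ K, dist (F x) (g x) < ε }

/-- Separation relation of a family of functions. -/
def sepRel {A B : Type} (S : Set (A → B)) : Set (A × A) :=
  { p | ∀ f ∈ S, f p.1 = f p.2 }

/-- Entry-wise separation relation at the output entry `z`. -/
def sepRelAt {A Z : Type} (S : Set (A → (Z → ℝ))) (z : Z) : Set (A × A) :=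
  { p | ∀ f ∈ S, f p.1 z = f p.2 z }

/-- `C_ρ(A, B)`: continuous functions respecting the relation `ρ`. -/
def Crho {A B : Type} [TopologicalSpace A] [TopologicalSpace B] (ρ : Set (A × A)) :
    Set (A → B) :=
  { f | Continuous f ∧ ∀ p ∈ ρ, f p.1 = f p.2 }

/-- `C_ρ̄(A, ℝ^Z)` for a family of entry-wise relations `ρ̄ = (ρ_z)_{z ∈ Z}`. -/
def CrhoEntryRel {A Z : Type} [TopologicalSpace A] (ρ : Z → Set (A × A)) :
    Set (A → (Z → ℝ)) :=
  { f | Continuous f ∧ ∀ (z : Z), ∀ p ∈ ρ z, f p.1 z = f p.2 z }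

/-- `σ` is not a polynomial function. -/
def NotPolynomial (σ : ℝ → ℝ) : Prop :=
  ¬ ∃ p : Polynomial ℝ, ∀ x : ℝ, σ x = Polynomial.eval x p

/-- `c+1` widened copies of the layer space `M ⊆ Aff_G(ℝ^Z, ℝ^Z)`, from input multiplicity
`kin` to output multiplicity `kout` (union over interior multiplicities). -/
def WRep (σ : ℝ → ℝ) {Z : Type} (M : Set ((Z → ℝ) → (Z → ℝ))) :
    ∀ (_c kin kout : ℕ), Set ((Fin kin × Z → ℝ) → (Fin kout × Z → ℝ))
  | 0, kin, kout => layerPow M kin kout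
  | (c + 1), kin, kout =>
      { F | ∃ k, ∃ g ∈ WRep σ M c kin k, ∃ f ∈ layerPow M k kout,
          F = fun v => f (act σ (g v)) }

/-- `c+1` widened copies of `M`, starting at input multiplicity `kin` and ending with
output multiplicity `1` (canonically identified with `ℝ^Z`). -/
def WRepOut (σ : ℝ → ℝ) {Z : Type} (M : Set ((Z → ℝ) → (Z → ℝ))) :
    ∀ (_c kin : ℕ), Set ((Fin kin × Z → ℝ) → (Z → ℝ))
  | 0, kin => layerPowOut M kin
  | (c + 1), kin =>
      { F | ∃ k, ∃ g ∈ WRep σ M c kin k, ∃ f ∈ layerPowOut M k,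
          F = fun v => f (act σ (g v)) }

/-- `c+1` widened copies of `M`, with input multiplicity `1` (identified with `ℝ^Z`) and
output multiplicity `k`. -/
def WRepIn (σ : ℝ → ℝ) {Z : Type} (M : Set ((Z → ℝ) → (Z → ℝ))) :
    ∀ (_c k : ℕ), Set ((Z → ℝ) → (Fin k × Z → ℝ))
  | 0, k => layerPowIn M k
  | (c + 1), k =>
      { F | ∃ k', ∃ g ∈ WRepIn σ M c k', ∃ f ∈ layerPow M k' k,
          F = fun v => f (act σ (g v)) }

/-- The universality class `U(M, …, M)` of `c+2` copies of a layer space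
`M ⊆ Aff_G(ℝ^Z, ℝ^Z)`. -/
def UClassRep (σ : ℝ → ℝ) {Z : Type} [Fintype Z] (M : Set ((Z → ℝ) → (Z → ℝ))) (c : ℕ) :
    Set ((Z → ℝ) → (Z → ℝ)) :=
  UnifClosure { F | ∃ k, ∃ g ∈ WRepIn σ M c k, ∃ f ∈ layerPowOut M k,
      F = fun v => f (act σ (g v)) }

/-- The universality class `U(M₀, …, M_d, M, …, M)` of the chain `M₀, …, M_d` followed by
`c+1` copies of `M`. -/
def UClassPreRep (σ : ℝ → ℝ) (d : ℕ) (Y : Fin (d + 2) → Type)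
    [Fintype (Y (Fin.last (d + 1)))]
    (Mpre : ∀ i : Fin (d + 1), Set ((Y i.castSucc → ℝ) → (Y i.succ → ℝ)))
    (M : Set ((Y (Fin.last (d + 1)) → ℝ) → (Y (Fin.last (d + 1)) → ℝ))) (c : ℕ) :
    Set ((Y 0 → ℝ) → (Y (Fin.last (d + 1)) → ℝ)) :=
  UnifClosure { F | ∃ k, ∃ g ∈ WPre σ d Y Mpre k, ∃ f ∈ WRepOut σ M c k,
      F = fun v => f (act σ (g v)) }

/-- The universality class `U(M₀, …, M_d, N)` of the chain `M₀, …, M_d` followed by one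
extra layer space `N`. -/
def UClassApp1 (σ : ℝ → ℝ) (d : ℕ) (Y : Fin (d + 2) → Type)
    (M : ∀ i : Fin (d + 1), Set ((Y i.castSucc → ℝ) → (Y i.succ → ℝ)))
    {Z : Type} [Fintype Z]
    (N : Set ((Y (Fin.last (d + 1)) → ℝ) → (Z → ℝ))) : Set ((Y 0 → ℝ) → (Z → ℝ)) :=
  UnifClosure { F | ∃ k, ∃ g ∈ WPre σ d Y M k, ∃ f ∈ layerPowOut N k,
      F = fun v => f (act σ (g v)) }

/-- The universality class `U(M₀, …, M_d, N₁, N₂)` of the chain `M₀, …, M_d` followed by two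
extra layer spaces `N₁, N₂`. -/
def UClassApp2 (σ : ℝ → ℝ) (d : ℕ) (Y : Fin (d + 2) → Type)
    (M : ∀ i : Fin (d + 1), Set ((Y i.castSucc → ℝ) → (Y i.succ → ℝ)))
    {Z₁ Z₂ : Type} [Fintype Z₂]
    (N₁ : Set ((Y (Fin.last (d + 1)) → ℝ) → (Z₁ → ℝ)))
    (N₂ : Set ((Z₁ → ℝ) → (Z₂ → ℝ))) : Set ((Y 0 → ℝ) → (Z₂ → ℝ)) :=
  UnifClosure { F | ∃ k₁, ∃ g ∈ WPre σ d Y M k₁, ∃ k₂, ∃ m ∈ layerPow N₁ k₁ k₂,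
      ∃ f ∈ layerPowOut N₂ k₂, F = fun v => f (act σ (m (act σ (g v)))) }

/-- The universality class `U(M₁, M₂, M₃)` of three layer spaces on a common space `ℝ^Z`. -/
def UClass3 (σ : ℝ → ℝ) {Z : Type} [Fintype Z] (M₁ M₂ M₃ : Set ((Z → ℝ) → (Z → ℝ))) :
    Set ((Z → ℝ) → (Z → ℝ)) :=
  UnifClosure { F | ∃ k₁ k₂, ∃ g ∈ layerPowIn M₁ k₁, ∃ m ∈ layerPow M₂ k₁ k₂,
      ∃ f ∈ layerPowOut M₃ k₂, F = fun v => f (act σ (m (act σ (g v)))) }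

/-- The invariant layer space `I = Aff_G(ℝ^Y, ℝ)`: all `G`-invariant affine maps, with `ℝ`
realized as the trivial permutation representation `ℝ^{Unit}`. -/
def InvAff (G : Type) [Group G] {Y : Type} [MulAction G Y] :
    Set ((Y → ℝ) → (Unit → ℝ)) :=
  { f | IsAffine f ∧ ∀ (g : G) (v : Y → ℝ), f (pSMul g v) = f v }

/-- The fully connected layer space `L = Aff(ℝ, ℝ)`, with `ℝ` realized as `ℝ^{Unit}`. -/
def Lfull : Set ((Unit → ℝ) → (Unit → ℝ)) :=
  { f | ∃ a b : ℝ, f = fun v _ => a * v () + b }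

/-- The width-1 convolutional layer space `C ⊆ Aff_G(ℝ^X, ℝ^X)`:
`v ↦ a·v + (bias constant on `G`-orbits)`, i.e. `v ↦ a·v + ∑ⱼ yⱼ 1_{Xⱼ}`. -/
def ConvG (G : Type) [Group G] {X : Type} [MulAction G X] : Set ((X → ℝ) → (X → ℝ)) :=
  { f | ∃ (a : ℝ) (b : X → ℝ), (∀ (g : G) (z : X), b (g • z) = b z) ∧
      f = fun v z => a * v z + b z }

/-- The width-1 convolutional layer space for `S_n` acting on `ℝ^n`:
`C = { v ↦ a·v + b𝟙 }`. -/
def ConvC (n : ℕ) : Set ((Fin n → ℝ) → (Fin n → ℝ)) :=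
  { f | ∃ a b : ℝ, f = fun v i => a * v i + b }

/-- The PointNet (DeepSets) layer space for `S_n` acting on `ℝ^n`:
`P = { v ↦ (a·Id + c·𝟙𝟙ᵀ) v + b𝟙 }`. -/
def PointNetP (n : ℕ) : Set ((Fin n → ℝ) → (Fin n → ℝ)) :=
  { f | ∃ a c b : ℝ, f = fun v i => a * v i + c * (∑ j, v j) + b }
end EquivUnivPreamble

/-- Pointwise differentiation of a curve of continuous functions on a compact space is
differentiation in the uniform norm as soon as the derivative is a continuous curve. -/
theorem hasDerivAt_continuousMap_of_pointwise {X : Type*} [TopologicalSpace X] [CompactSpace X]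
    {F F' : ℝ → C(X, ℝ)} (hF' : Continuous F')
    (h : ∀ x t, HasDerivAt (fun s => F s x) (F' t x) t) (t : ℝ) : HasDerivAt F (F' t) t := by
  have key : F = fun s => F t + ∫ u in t..s, F' u := by
    funext s
    ext x
    have h1 : (∫ u in t..s, F' u) x = ∫ u in t..s, F' u x :=
      (((ContinuousMap.evalCLM ℝ x).intervalIntegral_comp_comm
        (hF'.intervalIntegrable t s)).symm : _)
    have h2 : ∫ u in t..s, F' u x = F s x - F t x :=
      intervalIntegral.integral_eq_sub_of_hasDerivAt (fun u _ => h x u)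
        (((continuous_eval_const x).comp hF').intervalIntegrable t s)
    rw [ContinuousMap.add_apply, h1, h2]
    ring
  have h3 : HasDerivAt (fun s => F t + ∫ u in t..s, F' u) (F' t) t :=
    (intervalIntegral.integral_hasDerivAt_right (hF'.intervalIntegrable t t)
      (hF'.stronglyMeasurableAtFilter _ _) hF'.continuousAt).const_add _
  rwa [← key] at h3

/-- The antiderivative vanishing at `0` of a continuous function. -/
noncomputable def antideriv (τ : C(ℝ, ℝ)) : C(ℝ, ℝ) :=
  ⟨fun t => ∫ s in (0 : ℝ)..t, τ s,
    intervalIntegral.continuous_primitive (fun a b => τ.continuous.intervalIntegrable a b) 0⟩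

theorem hasDerivAt_antideriv (τ : C(ℝ, ℝ)) (t : ℝ) : HasDerivAt (antideriv τ) (τ t) t :=
  intervalIntegral.integral_hasDerivAt_right (τ.continuous.intervalIntegrable 0 t)
    (τ.continuous.stronglyMeasurableAtFilter _ _) τ.continuous.continuousAt

/-- The function `x ↦ x ^ m * τ (w * x + b)` on a set `s`. -/
def ridge (s : Set ℝ) (τ : C(ℝ, ℝ)) (m : ℕ) (w b : ℝ) : C(s, ℝ) :=
  ⟨fun x => (x : ℝ) ^ m * τ (w * x + b), by fun_prop⟩

theorem continuous_ridge (s : Set ℝ) (τ : C(ℝ, ℝ)) (m : ℕ) :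
    Continuous fun p : ℝ × ℝ => ridge s τ m p.1 p.2 := by
  apply ContinuousMap.continuous_of_continuous_uncurry
  simp only [ridge, ContinuousMap.coe_mk, Function.uncurry_def]
  fun_prop

theorem hasDerivAt_ridge_bias (s : Set ℝ) [CompactSpace s] (τ : C(ℝ, ℝ)) (m : ℕ) (w b : ℝ) :
    HasDerivAt (fun b => ridge s (antideriv τ) m w b) (ridge s τ m w b) b := by
  refine hasDerivAt_continuousMap_of_pointwise (F' := fun b => ridge s τ m w b)
    ((continuous_ridge s τ m).comp (by fun_prop : Continuous fun b : ℝ => (w, b)))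
    (fun x t => ?_) b
  have h := ((hasDerivAt_antideriv τ (w * x + t)).comp t
    ((hasDerivAt_id t).const_add (w * (x : ℝ)))).const_mul ((x : ℝ) ^ m)
  simpa [ridge, Function.comp_def] using h

theorem hasDerivAt_ridge_weight (s : Set ℝ) [CompactSpace s] (τ : C(ℝ, ℝ)) (m : ℕ) (w b : ℝ) :
    HasDerivAt (fun w => ridge s (antideriv τ) m w b) (ridge s τ (m + 1) w b) w := by
  refine hasDerivAt_continuousMap_of_pointwise (F' := fun w => ridge s τ (m + 1) w b)
    ((continuous_ridge s τ (m + 1)).comp (by fun_prop : Continuous fun w : ℝ => (w, b)))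
    (fun x t => ?_) w
  have h := ((hasDerivAt_antideriv τ (t * x + b)).comp t
    (((hasDerivAt_id t).mul_const (x : ℝ)).add_const b)).const_mul ((x : ℝ) ^ m)
  have hx : (x : ℝ) ^ m * (τ (t * x + b) * (1 * x)) = x ^ (m + 1) * τ (t * x + b) := by ring
  rw [hx] at h
  exact h

/-- The space of real polynomial functions of degree less than `n`. -/
noncomputable def polyFunLT (n : ℕ) : Submodule ℝ (ℝ → ℝ) :=
  (Polynomial.degreeLT ℝ n).map (LinearMap.pi fun x => Polynomial.leval x)

theorem mem_polyFunLT {n : ℕ} {f : ℝ → ℝ} :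
    f ∈ polyFunLT n ↔ ∃ p : Polynomial ℝ, p.degree < n ∧ ∀ x, f x = p.eval x := by
  simp only [polyFunLT, Submodule.mem_map, Polynomial.mem_degreeLT, funext_iff,
    LinearMap.pi_apply, Polynomial.leval_apply, eq_comm]

theorem isClosed_polyFunLT (n : ℕ) : IsClosed (polyFunLT n : Set (ℝ → ℝ)) := by
  have : FiniteDimensional ℝ (Polynomial.degreeLT ℝ n) :=
    (Polynomial.degreeLTEquiv ℝ n).symm.finiteDimensional
  have : FiniteDimensional ℝ (polyFunLT n) := by unfold polyFunLT; infer_instance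
  exact Submodule.closed_of_finiteDimensional _

theorem mem_polyFunLT_of_hasDerivAt {n : ℕ} {f f' : ℝ → ℝ} (hf : ∀ x, HasDerivAt f (f' x) x)
    (h : f' ∈ polyFunLT n) : f ∈ polyFunLT (n + 1) := by
  obtain ⟨p, hp, hpf⟩ := mem_polyFunLT.1 h
  obtain ⟨q, hq⟩ : ∃ q : Polynomial ℝ, q.derivative = p ∧ q.degree < ((n + 1 : ℕ) : WithBot ℕ) := by
    refine ⟨∑ i : Fin n, Polynomial.monomial (i + 1) (p.coeff i / (i + 1)), ?_, ?_⟩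
    · rw [Polynomial.derivative_sum]
      ext k
      simp only [Polynomial.derivative_monomial, Polynomial.finsetSum_coeff,
        Polynomial.coeff_monomial, Nat.add_sub_cancel]
      by_cases hk : k < n
      · rw [Finset.sum_eq_single ⟨k, hk⟩]
        · have : (k : ℝ) + 1 ≠ 0 := by positivity
          simp [this]
        · intro i _ hi
          rw [if_neg]
          exact fun h => hi (Fin.ext h)
        · simp
      · rw [Finset.sum_eq_zero, Polynomial.coeff_eq_zero_of_degree_lt]
        · exact hp.trans_le (by exact_mod_cast not_lt.1 hk)
        · intro i _
          rw [if_neg]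
          have := i.2
          omega
    · rw [← Polynomial.mem_degreeLT]
      refine Submodule.sum_mem _ fun i _ => Polynomial.mem_degreeLT.2 ?_
      refine (Polynomial.degree_monomial_le _ _).trans_lt ?_
      exact_mod_cast Nat.succ_lt_succ i.2
  have hd : ∀ x, HasDerivAt (fun y => f y - q.eval y) 0 x := fun x => by
    have := (hf x).sub (q.hasDerivAt x)
    rwa [hq.1, hpf x, sub_self] at this
  have hc : ∀ x, f x - q.eval x = f 0 - q.eval 0 := fun x =>
    is_const_of_deriv_eq_zero (fun y => (hd y).differentiableAt) (fun y => (hd y).deriv) x 0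
  refine mem_polyFunLT.2 ⟨q + Polynomial.C (f 0 - q.eval 0), ?_, fun x => ?_⟩
  · refine (Polynomial.degree_add_le _ _).trans_lt (max_lt hq.2 ?_)
    refine Polynomial.degree_C_le.trans_lt ?_
    exact_mod_cast Nat.succ_pos n
  · rw [Polynomial.eval_add, Polynomial.eval_C, ← hc x]
    ring

theorem mem_polyFunLT_of_hasDerivAt_param {n : ℕ} {Q : ℝ → ℝ → ℝ} {q : ℝ → ℝ} {w : ℝ}
    (hQ : ∀ w, Q w ∈ polyFunLT n) (hq : ∀ b, HasDerivAt (fun w => Q w b) (q b) w) :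
    q ∈ polyFunLT n := by
  refine (isClosed_polyFunLT n).mem_of_tendsto (b := nhdsWithin (0 : ℝ) {0}ᶜ)
    (f := fun t : ℝ => t⁻¹ • (Q (w + t) - Q w)) ?_ (Filter.Eventually.of_forall fun t => ?_)
  · exact tendsto_pi_nhds.2 fun b => (hasDerivAt_iff_tendsto_slope_zero.1 (hq b))
  · exact Submodule.smul_mem _ _ (Submodule.sub_mem _ (hQ _) (hQ _))

/-- If a functional annihilates all `x ↦ σ (w * x + b)`, its values on the ridge functions built
from iterated antiderivatives of `σ` are polynomial in the bias. -/
theorem ridge_mem_polyFunLT (s : Set ℝ) [CompactSpace s] (σ : C(ℝ, ℝ)) (l : C(s, ℝ) →L[ℝ] ℝ)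
    (hl : ∀ w b, l (ridge s σ 0 w b) = 0) (m j : ℕ) (w : ℝ) :
    (fun b => l (ridge s (antideriv^[j] σ) m w b)) ∈ polyFunLT (j + m) := by
  induction m generalizing j w with
  | zero =>
    induction j with
    | zero =>
      simp only [Function.iterate_zero, id_eq, hl]
      exact Submodule.zero_mem _
    | succ j ih =>
      rw [Nat.add_right_comm]
      refine mem_polyFunLT_of_hasDerivAt (fun b => ?_) ih
      rw [Function.iterate_succ_apply']
      exact l.hasFDerivAt.comp_hasDerivAt b (hasDerivAt_ridge_bias s _ 0 w b)
  | succ m ih =>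
    have h := fun w => ih (j + 1) w
    rw [Nat.add_right_comm] at h
    refine mem_polyFunLT_of_hasDerivAt_param (w := w) h fun b => ?_
    rw [Function.iterate_succ_apply']
    exact l.hasFDerivAt.comp_hasDerivAt w (hasDerivAt_ridge_weight s _ m w b)

theorem exists_dual_ne_zero_of_notMem {E : Type*} [NormedAddCommGroup E] [NormedSpace ℝ E]
    {V : Submodule ℝ E} (hV : IsClosed (V : Set E)) {x : E} (hx : x ∉ V) :
    ∃ l : E →L[ℝ] ℝ, (∀ v ∈ V, l v = 0) ∧ l x ≠ 0 := by
  obtain ⟨l, u, hlx, hlu⟩ := geometric_hahn_banach_point_closed V.convex hV hx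
  have h0 : u < 0 := by simpa using hlu 0 V.zero_mem
  refine ⟨l, fun v hv => ?_, (hlx.trans h0).ne⟩
  by_contra hne
  have := hlu ((u / l v) • v) (V.smul_mem _ hv)
  rw [map_smul, smul_eq_mul, div_mul_cancel₀ _ hne] at this
  exact lt_irrefl _ this

/-- The universal approximation theorem for one hidden layer on an interval: the functions
`x ↦ σ (w * x + b)` span a dense subspace if `σ` is not a polynomial. -/
theorem span_ridge_dense (σ : C(ℝ, ℝ)) (hσ : NotPolynomial σ) (R : ℝ) :
    (Submodule.span ℝ (Set.range fun p : ℝ × ℝ =>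
      ridge (Set.Icc (-R) R) σ 0 p.1 p.2)).topologicalClosure = ⊤ := by
  set V := (Submodule.span ℝ (Set.range fun p : ℝ × ℝ =>
      ridge (Set.Icc (-R) R) σ 0 p.1 p.2)).topologicalClosure
  have hVc : IsClosed (V : Set C(Set.Icc (-R) R, ℝ)) := Submodule.isClosed_topologicalClosure _
  have hσV : ∀ w b, ridge (Set.Icc (-R) R) σ 0 w b ∈ V := fun w b =>
    Submodule.le_topologicalClosure _ (Submodule.subset_span ⟨(w, b), rfl⟩)
  have hpow : ∀ m : ℕ, Polynomial.toContinuousMapOn (Polynomial.X ^ m) (Set.Icc (-R) R) ∈ V := by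
    intro m
    by_contra hm
    obtain ⟨l, hl, hlm⟩ := exists_dual_ne_zero_of_notMem hVc hm
    have h := ridge_mem_polyFunLT _ σ l (fun w b => hl _ (hσV w b)) m 0 0
    obtain ⟨p, -, hp⟩ := mem_polyFunLT.1 h
    have hr : ∀ b, ridge (Set.Icc (-R) R) σ m 0 b =
        σ b • Polynomial.toContinuousMapOn (Polynomial.X ^ m) (Set.Icc (-R) R) := fun b => by
      ext x
      simp [ridge, mul_comm]
    refine hσ ⟨Polynomial.C (l (Polynomial.toContinuousMapOn (Polynomial.X ^ m) _))⁻¹ * p,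
      fun b => ?_⟩
    have := hp b
    simp only [Function.iterate_zero, id_eq, hr, map_smul, smul_eq_mul] at this
    rw [Polynomial.eval_mul, Polynomial.eval_C, ← this]
    field_simp
  refine eq_top_iff.2 fun f _ => ?_
  have hf : f ∈ (polynomialFunctions (Set.Icc (-R) R)).topologicalClosure := by
    rw [polynomialFunctions_closure_eq_top]
    trivial
  refine closure_minimal ?_ hVc hf
  rintro _ ⟨p, -, rfl⟩
  simp only [RingHom.coe_coe, SetLike.mem_coe]
  induction p using Polynomial.induction_on' with
  | add p q hp hq => rw [map_add]; exact V.add_mem hp hq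
  | monomial m a =>
    rw [← Polynomial.smul_X_eq_monomial, map_smul]
    exact V.smul_mem a (hpow m)

/-- Finitely many continuous functions can be approximated on an interval by linear combinations
of the same finite family of functions `x ↦ σ (w j * x + b j)`. -/
theorem exists_shallow_approx {σ : ℝ → ℝ} (hσc : Continuous σ) (hσp : NotPolynomial σ)
    {k : ℕ} (f : Fin k → C(ℝ, ℝ)) (R : ℝ) {ε : ℝ} (hε : 0 < ε) :
    ∃ (N : ℕ) (w b : Fin N → ℝ) (a : Fin k → Fin N → ℝ), ∀ x, |x| ≤ R → ∀ i,
      |f i x - ∑ j, a i j * σ (w j * x + b j)| < ε := by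
  classical
  have h : ∀ i, ∃ c : ℝ × ℝ →₀ ℝ, ∀ x, |x| ≤ R →
      |f i x - ∑ p ∈ c.support, c p * σ (p.1 * x + p.2)| < ε := fun i => by
    have hd : (f i).restrict (Set.Icc (-R) R) ∈ (Submodule.span ℝ (Set.range fun p : ℝ × ℝ =>
        ridge (Set.Icc (-R) R) ⟨σ, hσc⟩ 0 p.1 p.2)).topologicalClosure := by
      rw [span_ridge_dense ⟨σ, hσc⟩ hσp]
      trivial
    obtain ⟨g, hg, hfg⟩ := Metric.mem_closure_iff.1 hd ε hε
    obtain ⟨c, rfl⟩ := Finsupp.mem_span_range_iff_exists_finsupp.1 hg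
    refine ⟨c, fun x hx => ?_⟩
    have := (ContinuousMap.dist_lt_iff hε).1 hfg ⟨x, abs_le.1 hx⟩
    simpa [Real.dist_eq, Finsupp.sum, ridge, ContinuousMap.sum_apply] using this
  choose c hc using h
  let s : Finset (ℝ × ℝ) := Finset.univ.biUnion fun i => (c i).support
  refine ⟨s.card, fun j => (s.equivFin.symm j).1.1, fun j => (s.equivFin.symm j).1.2,
    fun i j => c i (s.equivFin.symm j), fun x hx i => ?_⟩
  convert hc i x hx using 3
  rw [s.equivFin.symm.sum_comp fun p : s => c i p * σ (p.1.1 * x + p.1.2),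
    Finset.sum_coe_sort s fun p => c i p * σ (p.1 * x + p.2)]
  symm
  refine Finset.sum_subset (Finset.subset_biUnion_of_mem (fun i => (c i).support)
    (Finset.mem_univ i)) fun p _ hp => ?_
  rw [Finsupp.notMem_support_iff.1 hp, zero_mul]

theorem exists_delta_of_isCompact {E F : Type*} [PseudoMetricSpace E] [PseudoMetricSpace F]
    {Φ : E → F} (hΦ : Continuous Φ) {K : Set E} (hK : IsCompact K) {ε : ℝ} (hε : 0 < ε) :
    ∃ δ > 0, ∀ x ∈ K, ∀ y, dist x y < δ → dist (Φ x) (Φ y) < ε := by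
  obtain ⟨δ, hδ, h⟩ := Metric.mem_uniformity_dist.1
    (hK.uniformContinuousAt_of_continuousAt Φ (fun x _ => hΦ.continuousAt)
      (Metric.dist_mem_uniformity hε))
  exact ⟨δ, hδ, fun x hx y hxy => h hxy hx⟩

/-- The map `ℝ^n → ℝ^k ⊗ ℝ^n` applying the functions `G 1, …, G k` to each coordinate. -/
def coordwise {k : ℕ} (n : ℕ) (G : Fin k → ℝ → ℝ) (v : Fin n → ℝ) : Fin k × Fin n → ℝ :=
  fun p => G p.1 (v p.2)

theorem sum_mem_layerPow_convC (n : ℕ) {k h : ℕ} (a : Fin h → Fin k → ℝ) :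
    (fun (v : Fin k × Fin n → ℝ) (p : Fin h × Fin n) => ∑ j, a p.1 j * v (j, p.2)) ∈
      layerPow (ConvC n) k h :=
  ⟨fun i j v z => a i j * v z + 0, fun i j => ⟨a i j, 0, rfl⟩, fun v p => by simp⟩

theorem sum_mem_layerPowOut_convC (n : ℕ) {k : ℕ} (a : Fin k → ℝ) :
    (fun (v : Fin k × Fin n → ℝ) (z : Fin n) => ∑ j, a j * v (j, z)) ∈
      layerPowOut (ConvC n) k :=
  ⟨fun j v z => a j * v z + 0, fun j => ⟨a j, 0, rfl⟩, fun v z => by simp⟩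

/-- If the networks of depth `c + 1` approximate affine functions coordinatewise, then appending
an activation and a linear combination approximates all continuous functions coordinatewise. -/
theorem exists_approx_of_affine_approx {σ : ℝ → ℝ} (hσc : Continuous σ) (hσp : NotPolynomial σ)
    {n c : ℕ}
    (H : ∀ (N : ℕ) (w b : Fin N → ℝ) (R ε : ℝ), 0 < ε → ∃ G : Fin N → ℝ → ℝ,
      coordwise n G ∈ WRepIn σ (ConvC n) c N ∧ ∀ x, |x| ≤ R → ∀ j, |w j * x + b j - G j x| < ε)
    {k : ℕ} (f : Fin k → C(ℝ, ℝ)) (R : ℝ) {ε : ℝ} (hε : 0 < ε) :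
    ∃ (N : ℕ) (G : Fin N → ℝ → ℝ) (a : Fin k → Fin N → ℝ),
      coordwise n G ∈ WRepIn σ (ConvC n) c N ∧
      ∀ x, |x| ≤ R → ∀ i, |f i x - ∑ j, a i j * σ (G j x)| < ε := by
  obtain ⟨N, w, b, a, ha⟩ := exists_shallow_approx hσc hσp f R (half_pos hε)
  have hΦ : Continuous fun (u : Fin N → ℝ) (i : Fin k) => ∑ j, a i j * σ (u j) := by fun_prop
  have hK : IsCompact ((fun (x : ℝ) (j : Fin N) => w j * x + b j) '' Set.Icc (-R) R) :=
    isCompact_Icc.image (by fun_prop)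
  obtain ⟨δ, hδ, hδK⟩ := exists_delta_of_isCompact hΦ hK (half_pos hε)
  obtain ⟨G, hG, hGa⟩ := H N w b R δ hδ
  refine ⟨N, G, a, hG, fun x hx i => ?_⟩
  have h1 := hδK _ ⟨x, abs_le.1 hx, rfl⟩ (fun j => G j x)
    ((dist_pi_lt_iff hδ).2 fun j => by rw [Real.dist_eq]; exact hGa x hx j)
  have h2 := (dist_pi_lt_iff (half_pos hε)).1 h1 i
  rw [Real.dist_eq] at h2
  calc _ ≤ _ := abs_sub_le _ (∑ j, a i j * σ (w j * x + b j)) _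
    _ < ε / 2 + ε / 2 := add_lt_add (ha x hx i) h2
    _ = ε := add_halves ε

theorem exists_affine_approx {σ : ℝ → ℝ} (hσc : Continuous σ) (hσp : NotPolynomial σ) (n c : ℕ)
    (N : ℕ) (w b : Fin N → ℝ) (R ε : ℝ) (hε : 0 < ε) : ∃ G : Fin N → ℝ → ℝ,
      coordwise n G ∈ WRepIn σ (ConvC n) c N ∧
      ∀ x, |x| ≤ R → ∀ j, |w j * x + b j - G j x| < ε := by
  induction c generalizing N R ε with
  | zero =>
    exact ⟨fun j x => w j * x + b j,
      ⟨fun j v z => w j * v z + b j, fun j => ⟨w j, b j, rfl⟩, fun v p => rfl⟩,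
      fun x _ j => by simpa using hε⟩
  | succ c ih =>
    obtain ⟨N', G, a, hG, hGa⟩ := exists_approx_of_affine_approx hσc hσp ih
      (fun j => ⟨fun x => w j * x + b j, by fun_prop⟩ : Fin N → C(ℝ, ℝ)) R hε
    exact ⟨fun i x => ∑ j, a i j * σ (G j x),
      ⟨N', _, hG, _, sum_mem_layerPow_convC n a, rfl⟩, hGa⟩

/-- Every continuous function, applied coordinatewise, lies in the universality class of the
width-1 convolutional layers. -/
theorem comp_mem_UClassRep_convC {σ : ℝ → ℝ} (hσc : Continuous σ) (hσp : NotPolynomial σ)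
    (n c : ℕ) {f : ℝ → ℝ} (hf : Continuous f) :
    (fun (v : Fin n → ℝ) i => f (v i)) ∈ UClassRep σ (ConvC n) c := by
  intro K hK ε hε
  obtain ⟨R, hR⟩ := hK.isBounded.exists_norm_le
  obtain ⟨N, G, a, hG, hGa⟩ := exists_approx_of_affine_approx hσc hσp
    (exists_affine_approx hσc hσp n c) (fun _ : Fin 1 => ⟨f, hf⟩) R hε
  refine ⟨_, ⟨N, _, hG, _, sum_mem_layerPowOut_convC n (a 0), rfl⟩, fun v hv => ?_⟩
  refine (dist_pi_lt_iff hε).2 fun i => ?_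
  rw [Real.dist_eq]
  exact hGa (v i) ((norm_le_pi_norm v i).trans (hR v hv)) 0

theorem exists_of_mem_layerPow_convC {n k h : ℕ} {F : (Fin k × Fin n → ℝ) → (Fin h × Fin n → ℝ)}
    (hF : F ∈ layerPow (ConvC n) k h) : ∃ a b : Fin h → Fin k → ℝ,
      ∀ v p, F v p = ∑ j, (a p.1 j * v (j, p.2) + b p.1 j) := by
  obtain ⟨f, hf, hF⟩ := hF
  choose a b hab using hf
  exact ⟨a, b, fun v p => by simp [hF, hab]⟩

theorem exists_of_mem_layerPowOut_convC {n k : ℕ} {F : (Fin k × Fin n → ℝ) → (Fin n → ℝ)}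
    (hF : F ∈ layerPowOut (ConvC n) k) : ∃ a b : Fin k → ℝ,
      ∀ v z, F v z = ∑ j, (a j * v (j, z) + b j) := by
  obtain ⟨f, hf, hF⟩ := hF
  choose a b hab using hf
  exact ⟨a, b, fun v p => by simp [hF, hab]⟩

theorem exists_of_mem_WRepIn_convC {σ : ℝ → ℝ} (hσc : Continuous σ) {n c k : ℕ}
    {g : (Fin n → ℝ) → (Fin k × Fin n → ℝ)} (hg : g ∈ WRepIn σ (ConvC n) c k) :
    ∃ G : Fin k → ℝ → ℝ, (∀ j, Continuous (G j)) ∧ g = coordwise n G := by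
  induction c generalizing k with
  | zero =>
    obtain ⟨f, hf, hg⟩ := hg
    choose a b hab using hf
    refine ⟨fun j x => a j * x + b j, fun j => by fun_prop, ?_⟩
    funext v p
    simp [hg, hab, coordwise]
  | succ c ih =>
    obtain ⟨k', g', hg', f, hf, rfl⟩ := hg
    obtain ⟨G, hG, rfl⟩ := ih hg'
    obtain ⟨a, b, hab⟩ := exists_of_mem_layerPow_convC hf
    refine ⟨fun i x => ∑ j, (a i j * σ (G j x) + b i j), fun i => by fun_prop, ?_⟩
    funext v p
    simp [hab, act, coordwise]

/-- The members of the universality class of the width-1 convolutional layers apply one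
continuous function to each coordinate. -/
theorem exists_of_mem_UClassRep_convC {σ : ℝ → ℝ} (hσc : Continuous σ) {n c : ℕ}
    {F : (Fin n → ℝ) → (Fin n → ℝ)} (hF : F ∈ UClassRep σ (ConvC n) c) (i : Fin n) :
    ∃ f : ℝ → ℝ, Continuous f ∧ ∀ v, F v i = f (v i) := by
  have happ : ∀ K : Set (Fin n → ℝ), IsCompact K → ∀ ε > 0, ∃ f : ℝ → ℝ, Continuous f ∧
      ∀ v ∈ K, dist (F v i) (f (v i)) < ε := fun K hK ε hε => by
    obtain ⟨_, ⟨k, g, hg, f, hf, rfl⟩, h⟩ := hF K hK ε hε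
    obtain ⟨G, hG, rfl⟩ := exists_of_mem_WRepIn_convC hσc hg
    obtain ⟨a, b, hab⟩ := exists_of_mem_layerPowOut_convC hf
    refine ⟨fun x => ∑ j, (a j * σ (G j x) + b j), by fun_prop, fun v hv => ?_⟩
    have := (dist_pi_lt_iff hε).1 (h v hv) i
    simpa only [hab, act, coordwise] using this
  have hcont : Continuous fun v => F v i := by
    refine continuous_of_locally_uniform_approx_of_continuousAt fun v u hu => ?_
    obtain ⟨ε, hε, hεu⟩ := Metric.mem_uniformity_dist.1 hu
    obtain ⟨f, hf, h⟩ := happ _ (isCompact_closedBall v 1) ε hε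
    exact ⟨_, Metric.closedBall_mem_nhds v one_pos, fun v => f (v i),
      (by fun_prop : Continuous fun v : Fin n → ℝ => f (v i)).continuousAt,
      fun y hy => hεu (h y hy)⟩
  refine ⟨fun t => F (fun _ => t) i, hcont.comp (by fun_prop), fun v => ?_⟩
  refine eq_of_forall_dist_le fun ε hε => ?_
  obtain ⟨f, hf, h⟩ := happ {v, fun _ => v i} (Set.toFinite _).isCompact (ε / 2) (half_pos hε)
  have h1 := h v (by simp)
  have h2 := h (fun _ => v i) (by simp)
  exact (dist_triangle_right _ _ (f (v i))).trans (by linarith)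

theorem setOf_comp_eval_eq_Crho {n : ℕ} (i : Fin n) :
    { h : (Fin n → ℝ) → ℝ | ∃ f : ℝ → ℝ, Continuous f ∧ h = fun v => f (v i) } =
      Crho { p : (Fin n → ℝ) × (Fin n → ℝ) | p.1 i = p.2 i } := by
  ext h
  constructor
  · rintro ⟨f, hf, rfl⟩
    exact ⟨by fun_prop, fun p (hp : p.1 i = p.2 i) => congrArg f hp⟩
  · rintro ⟨hc, hh⟩
    exact ⟨fun t => h fun _ => t, hc.comp (by fun_prop),
      funext fun v => hh (v, fun _ => v i) rfl⟩

theorem setOf_comp_eval_ssubset_stabilizer_invariant {n : ℕ} (hn : 2 ≤ n) (i : Fin n) :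
    { h : (Fin n → ℝ) → ℝ | ∃ f : ℝ → ℝ, Continuous f ∧ h = fun v => f (v i) } ⊂
      { h : (Fin n → ℝ) → ℝ | Continuous h ∧ ∀ g : Equiv.Perm (Fin n), g i = i →
        ∀ v : Fin n → ℝ, h (fun j => v (g⁻¹ j)) = h v } := by
  rw [Set.ssubset_iff_of_subset]
  · refine ⟨fun v => ∑ j, v j, ⟨by fun_prop, fun g _ v => Equiv.sum_comp g⁻¹ v⟩, ?_⟩
    rintro ⟨f, -, hf⟩
    have : Nontrivial (Fin n) := Fin.nontrivial_iff_two_le.2 hn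
    obtain ⟨j, hj⟩ := exists_ne i
    have h0 := congrFun hf 0
    have h1 := congrFun hf (Pi.single j 1)
    simp only [Finset.sum_pi_single', Finset.mem_univ, if_true, Pi.single_eq_of_ne hj.symm] at h1
    simp only [Pi.zero_apply, Finset.sum_const_zero] at h0
    simp [← h0] at h1
  · rintro _ ⟨f, hf, rfl⟩
    refine ⟨by fun_prop, fun g hg v => ?_⟩
    simp only [Equiv.Perm.inv_eq_iff_eq.2 hg.symm]

/-- entry-wise characterization for width-1 CNNs: for `d ≥ 2`, the set
of first-coordinate projections of `U(C, …, C)` (`d` copies) equals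
`{ x ↦ f(x₁) : f ∈ C(ℝ, ℝ) }`, which equals `C_{ρ₁}(ℝ^n, ℝ)` for the relation
`ρ₁ = { (α, β) : α₁ = β₁ }`; moreover for `n ≥ 2` it is a proper subset of
`C_{Stab_{S_n}(1)}(ℝ^n, ℝ)`, the continuous functions invariant under permutations fixing
the first coordinate. -/
theorem conv_first_coordinate_projections
    (n : ℕ) (hn : 1 ≤ n) (σ : ℝ → ℝ) (hσc : Continuous σ) (hσp : NotPolynomial σ)
    (d : ℕ) (hd : 2 ≤ d) :
    ((fun (F : (Fin n → ℝ) → (Fin n → ℝ)) => fun v => F v ⟨0, hn⟩) ''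
          UClassRep σ (ConvC n) (d - 2)
        = { h : (Fin n → ℝ) → ℝ |
            ∃ f : ℝ → ℝ, Continuous f ∧ h = fun v => f (v ⟨0, hn⟩) }) ∧
    ((fun (F : (Fin n → ℝ) → (Fin n → ℝ)) => fun v => F v ⟨0, hn⟩) ''
          UClassRep σ (ConvC n) (d - 2)
        = Crho { p : (Fin n → ℝ) × (Fin n → ℝ) | p.1 ⟨0, hn⟩ = p.2 ⟨0, hn⟩ }) ∧
    (2 ≤ n →
      (fun (F : (Fin n → ℝ) → (Fin n → ℝ)) => fun v => F v ⟨0, hn⟩) ''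
          UClassRep σ (ConvC n) (d - 2)
        ⊂ { h : (Fin n → ℝ) → ℝ | Continuous h ∧
            ∀ gp : Equiv.Perm (Fin n), gp ⟨0, hn⟩ = ⟨0, hn⟩ →
              ∀ v : Fin n → ℝ, h (fun i => v (gp⁻¹ i)) = h v }) := by
  have himage : (fun (F : (Fin n → ℝ) → (Fin n → ℝ)) => fun v => F v ⟨0, hn⟩) ''
      UClassRep σ (ConvC n) (d - 2) =
        { h : (Fin n → ℝ) → ℝ | ∃ f : ℝ → ℝ, Continuous f ∧ h = fun v => f (v ⟨0, hn⟩) } := by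
    ext h
    constructor
    · rintro ⟨F, hF, rfl⟩
      obtain ⟨f, hf, hFf⟩ := exists_of_mem_UClassRep_convC hσc hF ⟨0, hn⟩
      exact ⟨f, hf, funext hFf⟩
    · rintro ⟨f, hf, rfl⟩
      exact ⟨_, comp_mem_UClassRep_convC hσc hσp n (d - 2) hf, rfl⟩
  rw [himage]
  exact ⟨rfl, setOf_comp_eval_eq_Crho _,
    fun h2 => setOf_comp_eval_ssubset_stabilizer_invariant h2 _⟩
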